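/- Let P be a finite graded simplicial poset of rank n with positive h-vector (h_0, …, h_n), i.e. h_i ≥ 0 for all i, and let P̂ be P with a top element 1̂ adjoined. Then the augmented Chow polynomial H^aug_{P̂}(x) = Σ_{S ⊆ {1,…,n}, S isolated} β_{P̂}(S) · x^{|S|} · (1+x)^{n+1−2|S|} is real-rooted (all of its complex roots are real). -/

import Mathlib

open Polynomial

noncomputable section

/-- A real polynomial is *real-rooted* if all of its complex roots are real.
(The zero polynomial is real-rooted by convention.) -/
def RealRooted (f : Polynomial ℝ) : Prop :=
  ∀ z ∈ (f.map (algebraMap ℝ ℂ)).roots, z.im = 0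

/-- All coefficients of the polynomial are nonnegative. -/
def NonnegCoeffs (f : Polynomial ℝ) : Prop := ∀ i, 0 ≤ f.coeff i

/-- The list of real roots of `f`, with multiplicity, in weakly decreasing order. -/
def descRoots (f : Polynomial ℝ) : List ℝ := (f.roots.sort (· ≤ ·)).reverse

/-- The interlacing condition on the weakly decreasing root sequences
`α` of `f` and `β` of `g` : `β₁ ≥ α₁ ≥ β₂ ≥ α₂ ≥ …`, together with the
degree condition `deg g ∈ {deg f, deg f + 1}`. -/
def InterlacesAux (f g : Polynomial ℝ) : Prop :=
  (g.natDegree = f.natDegree ∨ g.natDegree = f.natDegree + 1) ∧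
  (∀ (i : ℕ) (hf : i < (descRoots f).length) (hg : i < (descRoots g).length),
      (descRoots f).get ⟨i, hf⟩ ≤ (descRoots g).get ⟨i, hg⟩) ∧
  (∀ (i : ℕ) (hf : i < (descRoots f).length) (hg : i + 1 < (descRoots g).length),
      (descRoots g).get ⟨i + 1, hg⟩ ≤ (descRoots f).get ⟨i, hf⟩)

/-- `f ⪯ g` : `f` interlaces `g`.  Both polynomials are required to be real-rooted;
by convention `0 ⪯ 0`, `0 ⪯ f`, `f ⪯ 0`, and any two polynomials of degree at most 1
interlace. -/
def Interlaces (f g : Polynomial ℝ) : Prop :=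
  RealRooted f ∧ RealRooted g ∧
  (f = 0 ∨ g = 0 ∨ (f.natDegree ≤ 1 ∧ g.natDegree ≤ 1) ∨ InterlacesAux f g)

/-- A finite family of real-rooted polynomials is an interlacing sequence if
`F i ⪯ F j` for all `i < j`. -/
def InterlacingSeq {n : ℕ} (F : Fin n → Polynomial ℝ) : Prop :=
  ∀ i j : Fin n, i < j → Interlaces (F i) (F j)

/-- A polynomial of degree `d` is palindromic if `coeff i = coeff (d - i)` for all `i ≤ d`. -/
def Palindromic (f : Polynomial ℝ) : Prop :=
  ∀ i ≤ f.natDegree, f.coeff i = f.coeff (f.natDegree - i)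

/-- A set `S ⊆ ℕ` is isolated if `i ∈ S` implies `i + 1 ∉ S`. -/
def IsolatedSet (S : Finset ℕ) : Prop := ∀ i ∈ S, i + 1 ∉ S

instance : DecidablePred IsolatedSet := fun S =>
  decidable_of_iff (∀ i ∈ S, i + 1 ∉ S) Iff.rfl

/-- The descent set of a permutation `w` of `{1, …, n+1}` (encoded as a permutation of
`Fin (n+1)`), as a subset of `{1, …, n}` : `Des(w) = {i ∈ {1,…,n} : w(i) > w(i+1)}`. -/
def desSet {n : ℕ} (w : Equiv.Perm (Fin (n + 1))) : Finset ℕ :=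
  (Finset.univ.filter (fun i : Fin n => w i.succ < w i.castSucc)).image
    (fun i => i.val + 1)

/-- The polynomial `p_{n,k}^{S ⊆ T}(x) = Σ x^{des(w)}`, the sum over all permutations `w`
of `{1, …, n+1}` with `w(1) = k + 1`, `Des(w)` isolated and `S ⊆ Des(w) ⊆ T`. -/
def pPoly (n k : ℕ) (S T : Finset ℕ) : Polynomial ℝ :=
  ∑ w ∈ Finset.univ.filter (fun w : Equiv.Perm (Fin (n + 1)) =>
      (w 0 : ℕ) = k ∧ IsolatedSet (desSet w) ∧ S ⊆ desSet w ∧ desSet w ⊆ T),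
    Polynomial.X ^ (desSet w).card

/-- The shifted set `S - 1 = {i - 1 : i ∈ S} ∩ {1, …, n-1}`. -/
def shiftDown (n : ℕ) (S : Finset ℕ) : Finset ℕ :=
  (S.image (fun i => i - 1)) ∩ Finset.Icc 1 (n - 1)

section Poset

variable (P : Type*) [Fintype P] [PartialOrder P] [OrderBot P]

/-- A finite poset `P` with a minimum is simplicial of rank `n` if for every maximal
element `m` the interval `[⊥, m]` is order-isomorphic to the boolean lattice of
subsets of an `n`-element set. -/
def SimplicialOfRank (n : ℕ) : Prop :=
  ∀ m : P, IsMax m → Nonempty ((Set.Icc (⊥ : P) m) ≃o Finset (Fin n))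

variable {P}

/-- `rk` is a rank function: `rk ⊥ = 0` and ranks increase by one along covers. -/
def IsRankFunction (rk : P → ℕ) : Prop :=
  rk ⊥ = 0 ∧ ∀ a b : P, a ⋖ b → rk b = rk a + 1

/-- `f_{i-1}` : the number of elements of `P` of rank `i`. -/
def fvec (rk : P → ℕ) (i : ℕ) : ℕ := (Finset.univ.filter (fun x => rk x = i)).card

/-- The generating polynomial `Σ_{i=0}^n h_i x^i = Σ_{i=0}^n f_{i-1} x^i (1-x)^{n-i}`
of the h-vector of `P`. -/
def hPoly (rk : P → ℕ) (n : ℕ) : Polynomial ℤ :=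
  ∑ i ∈ Finset.range (n + 1),
    Polynomial.C (fvec rk i : ℤ) * Polynomial.X ^ i * (1 - Polynomial.X) ^ (n - i)

/-- The h-vector entry `h_k` of `P`. -/
def hvec (rk : P → ℕ) (n k : ℕ) : ℤ := (hPoly rk n).coeff k

/-- The flag f-vector `α_{P̂}(T)` : the number of chains in `P̂ ∖ {0̂, 1̂} = P ∖ {⊥}`
whose set of ranks is exactly `T`. -/
def flagF (rk : P → ℕ) (T : Finset ℕ) : ℕ :=
  Nat.card {c : Finset P // IsChain (· ≤ ·) (c : Set P) ∧ (⊥ : P) ∉ c ∧ c.image rk = T}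

/-- The flag h-vector `β_{P̂}(S) = Σ_{T ⊆ S} (-1)^{|S ∖ T|} α_{P̂}(T)`. -/
def flagH (rk : P → ℕ) (S : Finset ℕ) : ℤ :=
  ∑ T ∈ S.powerset, (-1) ^ ((S \ T).card) * (flagF rk T : ℤ)

/-- The flag h-vector of the dual poset `P̂*` : `β_{P̂*}(S) = β_{P̂}({n+1-s : s ∈ S})`. -/
def flagHDual (rk : P → ℕ) (n : ℕ) (S : Finset ℕ) : ℤ :=
  flagH rk (S.image (fun s => n + 1 - s))

/-- The Chow polynomial
`H_{P̂}(x) = Σ_{S ⊆ {2,…,n} isolated} β_{P̂}(S) x^{|S|} (1+x)^{n-2|S|}`. -/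
def chowPoly (rk : P → ℕ) (n : ℕ) : Polynomial ℝ :=
  ∑ S ∈ (Finset.Icc 2 n).powerset.filter IsolatedSet,
    (flagH rk S : ℝ) • (Polynomial.X ^ S.card * (1 + Polynomial.X) ^ (n - 2 * S.card))

/-- The augmented Chow polynomial
`H^aug_{P̂}(x) = Σ_{S ⊆ {1,…,n} isolated} β_{P̂}(S) x^{|S|} (1+x)^{n+1-2|S|}`. -/
def chowAugPoly (rk : P → ℕ) (n : ℕ) : Polynomial ℝ :=
  ∑ S ∈ (Finset.Icc 1 n).powerset.filter IsolatedSet,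
    (flagH rk S : ℝ) • (Polynomial.X ^ S.card * (1 + Polynomial.X) ^ (n + 1 - 2 * S.card))

/-- The Chow polynomial of the dual poset `P̂*`. -/
def chowDualPoly (rk : P → ℕ) (n : ℕ) : Polynomial ℝ :=
  ∑ S ∈ (Finset.Icc 2 n).powerset.filter IsolatedSet,
    (flagHDual rk n S : ℝ) • (Polynomial.X ^ S.card * (1 + Polynomial.X) ^ (n - 2 * S.card))

/-- The augmented Chow polynomial of the dual poset `P̂*`. -/
def chowAugDualPoly (rk : P → ℕ) (n : ℕ) : Polynomial ℝ :=
  ∑ S ∈ (Finset.Icc 1 n).powerset.filter IsolatedSet,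
    (flagHDual rk n S : ℝ) • (Polynomial.X ^ S.card * (1 + Polynomial.X) ^ (n + 1 - 2 * S.card))

end Poset

end

/-!
By the simpliciality of `P`, a flag of `P` is given by its largest element and a flag of a Boolean
lattice, so the flag f-vector and the flag h-vector are linear in the f-polynomial of `P`. Written
in terms of the h-vector, this gives
`∑ S, β(S) * y ^ |S| = ∑ k, h_k * p_{n,k}(y)`, the sum being over the isolated sets `S`, where
`p_{n,k}` counts by descents the permutations of `{0, …, n}` which start with `k` and have an
isolated descent set. At a point of the closed upper half-plane the values of `p_{n,0}, …, p_{n,n}`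
interlace; inside the half-plane, those of a nonnegative combination in which `p_{n,0}` occurs are
thus on one side of a line through the origin and do not cancel. Hence all roots of the sum are real
and nonpositive. As `x / (1 + x) ^ 2` is nonpositive only for real `x`, the augmented Chow
polynomial `(1 + x) ^ (n + 1) * ∑ S, β(S) * (x / (1 + x) ^ 2) ^ |S|` is real-rooted.
-/

/-! ### Interlacing at a point of the upper half-plane -/

section Interlacing

attribute [local instance] Complex.finrank_real_complex_fact

local notation "ω" => Complex.orientation.areaForm

lemma areaForm_mul_mul (z a b : ℂ) : ω (z * a) (z * b) = Complex.normSq z * ω a b := by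
  simp only [Complex.areaForm, Complex.normSq_apply, Complex.mul_im, Complex.mul_re,
    Complex.conj_re, Complex.conj_im]
  ring

lemma areaForm_mul_right_self (z a : ℂ) : ω a (z * a) = Complex.normSq a * z.im := by
  simp only [Complex.areaForm, Complex.normSq_apply, Complex.mul_im, Complex.mul_re,
    Complex.conj_re, Complex.conj_im]
  ring

/-- The numbers `a` and `b` interlace at `z`: turning counterclockwise, one meets `a`, `b` and
`z * a` in this order. If `z` lies in the upper half-plane and `f`, `g` are real polynomials with
nonnegative coefficients such that `f` interlaces `g`, then `a = f(z)` and `b = g(z)` satisfy this,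
by the Hermite–Biehler theorem applied to `f ⪯ g` and `g ⪯ X * f`. -/
def InterlacesAt (z a b : ℂ) : Prop := 0 ≤ ω a b ∧ 0 ≤ ω b (z * a)

namespace InterlacesAt

variable {z a b c : ℂ}

lemma refl (hz : 0 ≤ z.im) (a : ℂ) : InterlacesAt z a a := by
  refine ⟨by simp, ?_⟩
  rw [areaForm_mul_right_self]
  exact mul_nonneg (Complex.normSq_nonneg a) hz

lemma sum_left {ι : Type*} {s : Finset ι} {f : ι → ℂ} (h : ∀ i ∈ s, InterlacesAt z (f i) b) :
    InterlacesAt z (∑ i ∈ s, f i) b := by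
  simp only [InterlacesAt, Finset.mul_sum, map_sum, LinearMap.sum_apply]
  exact ⟨Finset.sum_nonneg fun i hi => (h i hi).1, Finset.sum_nonneg fun i hi => (h i hi).2⟩

lemma sum_right {ι : Type*} {s : Finset ι} {f : ι → ℂ} (h : ∀ i ∈ s, InterlacesAt z a (f i)) :
    InterlacesAt z a (∑ i ∈ s, f i) := by
  simp only [InterlacesAt, map_sum, LinearMap.sum_apply]
  exact ⟨Finset.sum_nonneg fun i hi => (h i hi).1, Finset.sum_nonneg fun i hi => (h i hi).2⟩

lemma add_left (ha : InterlacesAt z a c) (hb : InterlacesAt z b c) : InterlacesAt z (a + b) c := by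
  simp only [InterlacesAt, mul_add, map_add, LinearMap.add_apply]
  exact ⟨add_nonneg ha.1 hb.1, add_nonneg ha.2 hb.2⟩

lemma add_right (hb : InterlacesAt z a b) (hc : InterlacesAt z a c) : InterlacesAt z a (b + c) := by
  simp only [InterlacesAt, map_add, LinearMap.add_apply]
  exact ⟨add_nonneg hb.1 hc.1, add_nonneg hb.2 hc.2⟩

lemma mul_mul (h : InterlacesAt z a b) : InterlacesAt z (z * a) (z * b) := by
  simp only [InterlacesAt, areaForm_mul_mul]
  exact ⟨mul_nonneg (Complex.normSq_nonneg z) h.1, mul_nonneg (Complex.normSq_nonneg z) h.2⟩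

lemma mul_right (h : InterlacesAt z a b) : InterlacesAt z b (z * a) := by
  refine ⟨h.2, ?_⟩
  rw [areaForm_mul_mul]
  exact mul_nonneg (Complex.normSq_nonneg z) h.1

lemma sum_sum {ι κ : Type*} {s : Finset ι} {t : Finset κ} {f : ι → ℂ} {g : κ → ℂ}
    (h : ∀ i ∈ s, ∀ j ∈ t, InterlacesAt z (f i) (g j)) :
    InterlacesAt z (∑ i ∈ s, f i) (∑ j ∈ t, g j) :=
  sum_left fun i hi => sum_right (h i hi)

/-- The overlap `I` of the two intervals is where reflexivity enters: the sums are `L + I` and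
`I + R` with `L`, `I`, `R` interlacing in this order. -/
lemma sum_Ico (hz : 0 ≤ z.im) {f : ℕ → ℂ} {a b c d : ℕ} (hac : a ≤ c) (hbd : b ≤ d)
    (h : ∀ i j, i ≤ j → j < d → InterlacesAt z (f i) (f j)) :
    InterlacesAt z (∑ i ∈ Finset.Ico a b, f i) (∑ j ∈ Finset.Ico c d, f j) := by
  have separated {a b c d' : ℕ} (hbc : b ≤ c) (hd' : d' ≤ d) :
      InterlacesAt z (∑ i ∈ Finset.Ico a b, f i) (∑ j ∈ Finset.Ico c d', f j) := by
    refine sum_sum fun i hi j hj => ?_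
    rw [Finset.mem_Ico] at hi hj
    exact h i j (by lia) (by lia)
  rcases le_total b c with hbc | hcb
  · exact separated hbc le_rfl
  · rw [← Finset.sum_Ico_consecutive f hac hcb, ← Finset.sum_Ico_consecutive f hcb hbd]
    exact add_left (add_right (separated le_rfl hbd) (separated hcb le_rfl))
      (add_right (refl hz _) (separated le_rfl le_rfl))

lemma sum_smul_ne_zero (hz : 0 < z.im) {ι : Type*} {s : Finset ι} {h : ι → ℝ} {p : ι → ℂ}
    {i₀ : ι} (hi₀ : i₀ ∈ s) (hpos : 0 < h i₀) (hnonneg : ∀ i ∈ s, 0 ≤ h i) (hp : p i₀ ≠ 0)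
    (h_interlaces : ∀ i ∈ s, InterlacesAt z (p i₀) (p i)) : ∑ i ∈ s, h i • p i ≠ 0 := by
  suffices 0 < ω (∑ i ∈ s, h i • p i) (z * p i₀) by
    intro h0
    rw [h0, map_zero, LinearMap.zero_apply] at this
    exact this.false
  simp only [map_sum, map_smul, LinearMap.sum_apply, LinearMap.smul_apply, smul_eq_mul]
  refine Finset.sum_pos' (fun i hi => mul_nonneg (hnonneg i hi) (h_interlaces i hi).2) ⟨i₀, hi₀, ?_⟩
  rw [areaForm_mul_right_self]
  exact mul_pos hpos (mul_pos (Complex.normSq_pos.2 hp) hz)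

end InterlacesAt

/-- The invariant of the recursion `A' k = ∑ j ∈ [k, n], (A j + z * e j)`,
`e' k = ∑ j < k, A j`, which the values at `z` of `ascentPoly` and `descentPoly` satisfy. -/
structure IsInterlacingPair (z : ℂ) (n : ℕ) (A e : ℕ → ℂ) : Prop where
  left_left : ∀ i j, i ≤ j → j ≤ n → InterlacesAt z (A i) (A j)
  right_left : ∀ i j, i ≤ n → j ≤ n → InterlacesAt z (e i) (A j)
  add_add : ∀ i j, i ≤ j → j ≤ n → InterlacesAt z (A i + z * e i) (A j + z * e j)

namespace IsInterlacingPair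

variable {z : ℂ} {n : ℕ} {A e : ℕ → ℂ}

lemma right_sum_left_sum (hz : 0 ≤ z.im) (h : IsInterlacingPair z n A e) {k l : ℕ}
    (hk : k ≤ n + 1) :
    InterlacesAt z (∑ j ∈ Finset.Ico 0 k, A j) (∑ j ∈ Finset.Ico l (n + 1), (A j + z * e j)) := by
  rw [Finset.sum_add_distrib]
  refine .add_right (.sum_Ico hz l.zero_le hk fun i j hij hj => h.left_left i j hij (by lia)) ?_
  refine .sum_sum fun i hi j hj => (h.right_left j i ?_ ?_).mul_right <;>
    simp only [Finset.mem_Ico] at hi hj <;> lia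

lemma left_add (h : IsInterlacingPair z n A e) {i j : ℕ} (hij : i ≤ j) (hj : j ≤ n) :
    InterlacesAt z (A i) (A j + z * e j) :=
  .add_right (h.left_left i j hij hj) (h.right_left j i hj (hij.trans hj)).mul_right

lemma left_sum_add_sum (h : IsInterlacingPair z n A e) {a b c d : ℕ} (hbc : b ≤ c)
    (hd : d ≤ n + 1) :
    InterlacesAt z (∑ j ∈ Finset.Ico a b, A j) (∑ j ∈ Finset.Ico c d, (A j + z * e j)) := by
  refine .sum_sum fun i hi j hj => h.left_add ?_ ?_ <;>
    simp only [Finset.mem_Ico] at hi hj <;> lia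

lemma add_sum_add_sum (hz : 0 ≤ z.im) (h : IsInterlacingPair z n A e) {k l : ℕ} (hkl : k ≤ l)
    (hl : l ≤ n + 1) :
    InterlacesAt z
      (∑ j ∈ Finset.Ico k (n + 1), (A j + z * e j) + z * ∑ j ∈ Finset.Ico 0 k, A j)
      (∑ j ∈ Finset.Ico l (n + 1), (A j + z * e j) + z * ∑ j ∈ Finset.Ico 0 l, A j) := by
  have hp {a b c d : ℕ} (hac : a ≤ c) (hbd : b ≤ d) (hd : d ≤ n + 1) := InterlacesAt.sum_Ico hz
    (f := fun j => A j + z * e j) hac hbd fun i j hij hj => h.add_add i j hij (by lia)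
  have middle : InterlacesAt z (∑ j ∈ Finset.Ico k l, A j)
      (∑ j ∈ Finset.Ico k l, (A j + z * e j)) := by
    rw [Finset.sum_add_distrib]
    refine .add_right (.refl hz _)
      (.sum_sum fun i hi j hj => (h.right_left j i ?_ ?_).mul_right) <;>
      simp only [Finset.mem_Ico] at hi hj <;> lia
  have initial : InterlacesAt z (∑ j ∈ Finset.Ico 0 k, A j) (∑ j ∈ Finset.Ico k l, A j) :=
    .sum_Ico hz k.zero_le hkl fun i j hij hj => h.left_left i j hij (by lia)
  rw [← Finset.sum_Ico_consecutive _ hkl hl, ← Finset.sum_Ico_consecutive A k.zero_le hkl,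
    mul_add, add_assoc, ← add_assoc _ (z * _)]
  refine .add_left (.add_right (.add_right ?_ ?_) middle.mul_right)
    (.add_right (.refl hz _) (.add_left ?_ initial.mul_mul))
  · exact hp hkl hl le_rfl
  · exact (h.left_sum_add_sum le_rfl hl).mul_right
  · exact (h.left_sum_add_sum le_rfl le_rfl).mul_right

lemma succ (hz : 0 ≤ z.im) (h : IsInterlacingPair z n A e) :
    IsInterlacingPair z (n + 1) (fun k => ∑ j ∈ Finset.Ico k (n + 1), (A j + z * e j))
      (fun k => ∑ j ∈ Finset.Ico 0 k, A j) where
  left_left _ _ hij _ := .sum_Ico hz hij le_rfl fun a b hab hb => h.add_add a b hab (by lia)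
  right_left _ _ hi _ := h.right_sum_left_sum hz hi
  add_add _ _ hij hj := h.add_sum_add_sum hz hij hj

end IsInterlacingPair

end Interlacing

/-! ### Permutations with isolated descent set -/

mutual

/-- The polynomial counting by descents the permutations `w` of `{0, …, n}` with `w 0 = k` whose
descent set is isolated and whose first step is an ascent (all permutations for `n = 0`). The
recursion removes the first letter. -/
noncomputable def ascentPoly : ℕ → ℕ → ℝ[X]
  | 0, _ => 1
  | n + 1, k => ∑ j ∈ Finset.Ico k (n + 1), (ascentPoly n j + X * descentPoly n j)

/-- The companion of `ascentPoly` for the permutations whose first step is a descent, this descent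
not being counted. -/
noncomputable def descentPoly : ℕ → ℕ → ℝ[X]
  | 0, _ => 0
  | n + 1, k => ∑ j ∈ Finset.Ico 0 k, ascentPoly n j

end

/-- The polynomial counting by descents the permutations `w` of `{0, …, n}` with `w 0 = k` whose
descent set is isolated. -/
noncomputable def isolatedDescentPoly (n k : ℕ) : ℝ[X] := ascentPoly n k + X * descentPoly n k

@[simp]
lemma ascentPoly_zero (k : ℕ) : ascentPoly 0 k = 1 := by rw [ascentPoly]

@[simp]
lemma descentPoly_zero (k : ℕ) : descentPoly 0 k = 0 := by rw [descentPoly]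

lemma ascentPoly_succ (n k : ℕ) :
    ascentPoly (n + 1) k = ∑ j ∈ Finset.Ico k (n + 1), isolatedDescentPoly n j := by
  rw [ascentPoly]
  rfl

lemma descentPoly_succ (n k : ℕ) :
    descentPoly (n + 1) k = ∑ j ∈ Finset.Ico 0 k, ascentPoly n j := by
  rw [descentPoly]

lemma aeval_isolatedDescentPoly {S : Type*} [CommRing S] [Algebra ℝ S] (z : S) (n k : ℕ) :
    aeval z (isolatedDescentPoly n k) =
      aeval z (ascentPoly n k) + z * aeval z (descentPoly n k) := by
  simp [isolatedDescentPoly]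

@[simp]
lemma isolatedDescentPoly_zero (k : ℕ) : isolatedDescentPoly 0 k = 1 := by
  simp [isolatedDescentPoly]

lemma isolatedDescentPoly_succ_zero (n : ℕ) :
    isolatedDescentPoly (n + 1) 0 = ∑ j ∈ Finset.range (n + 1), isolatedDescentPoly n j := by
  simp [isolatedDescentPoly, ascentPoly_succ, descentPoly_succ]

lemma isInterlacingPair_aeval {z : ℂ} (hz : 0 ≤ z.im) (n : ℕ) :
    IsInterlacingPair z n (fun k => aeval z (ascentPoly n k))
      (fun k => aeval z (descentPoly n k)) := by
  induction n with
  | zero =>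
    simp only [ascentPoly_zero, descentPoly_zero, map_one, map_zero]
    exact ⟨fun _ _ _ _ => .refl hz 1, fun _ _ _ _ => by simp [InterlacesAt],
      fun _ _ _ _ => .refl hz _⟩
  | succ n ih =>
    simpa only [ascentPoly_succ, descentPoly_succ, map_sum, aeval_isolatedDescentPoly]
      using ih.succ hz

lemma interlacesAt_isolatedDescentPoly {z : ℂ} (hz : 0 ≤ z.im) {n i j : ℕ} (hij : i ≤ j)
    (hj : j ≤ n) :
    InterlacesAt z (aeval z (isolatedDescentPoly n i)) (aeval z (isolatedDescentPoly n j)) := by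
  simpa only [aeval_isolatedDescentPoly] using (isInterlacingPair_aeval hz n).add_add i j hij hj

lemma aeval_sum_smul_isolatedDescentPoly_ne_zero {z : ℂ} (hz : 0 < z.im) {n : ℕ} {h : ℕ → ℝ}
    (h0 : 0 < h 0) (hnonneg : ∀ k, 0 ≤ h k)
    (hn : aeval z (isolatedDescentPoly n 0) ≠ 0) :
    aeval z (∑ k ∈ Finset.range (n + 1), h k • isolatedDescentPoly n k) ≠ 0 := by
  simp only [map_sum, map_smul]
  refine InterlacesAt.sum_smul_ne_zero hz (i₀ := 0) (by simp) h0 (fun i _ => hnonneg i) hn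
    fun i hi => interlacesAt_isolatedDescentPoly hz.le i.zero_le ?_
  simpa [Nat.lt_succ_iff] using hi

lemma aeval_isolatedDescentPoly_zero_ne_zero {z : ℂ} (hz : 0 < z.im) (n : ℕ) :
    aeval z (isolatedDescentPoly n 0) ≠ 0 := by
  induction n with
  | zero => simp
  | succ n ih =>
    rw [isolatedDescentPoly_succ_zero]
    simpa using aeval_sum_smul_isolatedDescentPoly_ne_zero hz (h := fun _ => 1) one_pos
      (fun _ => zero_le_one) ih

lemma ascentPoly_descentPoly_eval_nonneg {x : ℝ} (hx : 0 ≤ x) (n : ℕ) :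
    ∀ k, 0 ≤ (ascentPoly n k).eval x ∧ 0 ≤ (descentPoly n k).eval x := by
  induction n with
  | zero => simp
  | succ n ih =>
    intro k
    rw [ascentPoly_succ, descentPoly_succ, eval_finsetSum, eval_finsetSum]
    refine ⟨Finset.sum_nonneg fun j _ => ?_, Finset.sum_nonneg fun j _ => (ih j).1⟩
    simpa [isolatedDescentPoly] using add_nonneg (ih j).1 (mul_nonneg hx (ih j).2)

lemma isolatedDescentPoly_eval_nonneg {x : ℝ} (hx : 0 ≤ x) (n k : ℕ) :
    0 ≤ (isolatedDescentPoly n k).eval x := by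
  obtain ⟨hA, he⟩ := ascentPoly_descentPoly_eval_nonneg hx n k
  simpa [isolatedDescentPoly] using add_nonneg hA (mul_nonneg hx he)

lemma isolatedDescentPoly_zero_eval_pos {x : ℝ} (hx : 0 ≤ x) (n : ℕ) :
    0 < (isolatedDescentPoly n 0).eval x := by
  induction n with
  | zero => simp
  | succ n ih =>
    rw [isolatedDescentPoly_succ_zero, eval_finsetSum]
    exact Finset.sum_pos' (fun j _ => isolatedDescentPoly_eval_nonneg hx n j) ⟨0, by simp, ih⟩

open ComplexOrder in
/-- Nonreal roots are excluded in the upper half-plane, hence by conjugation in the lower one, and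
positive roots by the signs of the coefficients. -/
lemma nonpos_of_aeval_sum_smul_isolatedDescentPoly_eq_zero {n : ℕ} {h : ℕ → ℝ} (h0 : 0 < h 0)
    (hnonneg : ∀ k, 0 ≤ h k) {z : ℂ}
    (hz : aeval z (∑ k ∈ Finset.range (n + 1), h k • isolatedDescentPoly n k) = 0) : z ≤ 0 := by
  have im_nonpos {z : ℂ}
      (hz : aeval z (∑ k ∈ Finset.range (n + 1), h k • isolatedDescentPoly n k) = 0) :
      z.im ≤ 0 := by
    by_contra! him
    exact aeval_sum_smul_isolatedDescentPoly_ne_zero him h0 hnonneg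
      (aeval_isolatedDescentPoly_zero_ne_zero him n) hz
  have him : z.im = 0 := by
    refine le_antisymm (im_nonpos hz) ?_
    simpa using im_nonpos (z := starRingEnd ℂ z) (by rw [aeval_conj, hz, map_zero])
  refine Complex.le_def.2 ⟨?_, him⟩
  by_contra! hre
  obtain ⟨x, rfl⟩ : ∃ x : ℝ, z = x := ⟨z.re, Complex.ext rfl him⟩
  replace hre : 0 ≤ x := by simpa using hre.le
  have hpos : 0 < (∑ k ∈ Finset.range (n + 1), h k • isolatedDescentPoly n k).eval x := by
    simp only [eval_finsetSum, eval_smul, smul_eq_mul]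
    exact Finset.sum_pos'
      (fun k _ => mul_nonneg (hnonneg k) (isolatedDescentPoly_eval_nonneg hre n k))
      ⟨0, by simp, mul_pos h0 (isolatedDescentPoly_zero_eval_pos hre n)⟩
  refine hpos.ne' ?_
  rwa [← Complex.coe_algebraMap, aeval_algebraMap_apply, Complex.coe_algebraMap,
    Complex.ofReal_eq_zero, coe_aeval_eq_eval] at hz

/-! ### The gamma transform -/

/-- Equivalently, the Koebe-like map `x ↦ x / (1 + x) ^ 2` takes nonpositive values only on the real
line: a nonreal preimage would lie on the unit circle and to the left of `-1`. -/
lemma im_eq_zero_of_eq_mul_one_add_sq {x : ℂ} {r : ℝ} (hr : r ≤ 0) (h : x = r * (1 + x) ^ 2) :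
    x.im = 0 := by
  have hre := congrArg Complex.re h
  have him := congrArg Complex.im h
  simp only [pow_two, Complex.mul_re, Complex.mul_im, Complex.add_re, Complex.add_im,
    Complex.one_re, Complex.one_im, Complex.ofReal_re, Complex.ofReal_im] at hre him
  by_contra hne
  have h_one : 2 * r * (1 + x.re) = 1 := mul_right_cancel₀ hne (by linear_combination -him)
  have h_circle : x.re ^ 2 + x.im ^ 2 = 1 := by
    have hr0 : r ≠ 0 := fun hr0 => by simp [hr0] at h_one
    exact mul_left_cancel₀ hr0 (by linear_combination x.re * h_one + hre)
  have h_left : 1 + x.re < 0 := by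
    by_contra! h_right
    linarith [mul_nonpos_of_nonpos_of_nonneg hr h_right]
  linarith [sq_nonneg x.im, mul_pos_of_neg_of_neg h_left (by linarith : x.re - 1 < 0)]

lemma aeval_sum_gammaExpansion {ι : Type*} {s : Finset ι} (c : ι → ℝ) {e : ι → ℕ} {d : ℕ}
    (he : ∀ i ∈ s, 2 * e i ≤ d) {x : ℂ} (hx : 1 + x ≠ 0) :
    aeval x (∑ i ∈ s, c i • (X ^ e i * (1 + X) ^ (d - 2 * e i)) : ℝ[X]) =
      (1 + x) ^ d * aeval (x / (1 + x) ^ 2) (∑ i ∈ s, c i • X ^ e i : ℝ[X]) := by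
  simp only [map_sum, map_smul, map_mul, map_pow, map_add, map_one, aeval_X, Finset.mul_sum]
  refine Finset.sum_congr rfl fun i hi => ?_
  rw [mul_smul_comm, div_pow, ← pow_mul, ← pow_sub_mul_pow (1 + x) (he i hi)]
  field_simp

open ComplexOrder in
theorem realRooted_sum_gammaExpansion {ι : Type*} {s : Finset ι} {c : ι → ℝ} {e : ι → ℕ} {d : ℕ}
    (he : ∀ i ∈ s, 2 * e i ≤ d)
    (hroots : ∀ z : ℂ, aeval z (∑ i ∈ s, c i • X ^ e i : ℝ[X]) = 0 → z ≤ 0) :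
    RealRooted (∑ i ∈ s, c i • (X ^ e i * (1 + X) ^ (d - 2 * e i))) := by
  intro x hx
  by_cases hx1 : 1 + x = 0
  · rw [← neg_eq_of_add_eq_zero_right hx1]
    simp
  replace hx := (mem_aroots'.1 hx).2
  rw [aeval_sum_gammaExpansion c he hx1, mul_eq_zero_iff_left (pow_ne_zero d hx1)] at hx
  obtain ⟨hre, him⟩ := Complex.le_def.1 (hroots _ hx)
  have hreal : x / (1 + x) ^ 2 = ((x / (1 + x) ^ 2).re : ℂ) := Complex.ext rfl him
  refine im_eq_zero_of_eq_mul_one_add_sq hre ?_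
  rw [← hreal, div_mul_cancel₀ _ (pow_ne_zero 2 hx1)]

/-! ### The h-vector as coordinates of the f-polynomial -/

/-- The f-polynomial of an interval of the Boolean lattice of rank `n` which contains the top and
whose bottom has rank `k`. These polynomials form the basis in which the coordinates of the
f-polynomial of a simplicial poset are its h-vector. -/
noncomputable def booleanIntervalPoly (n k : ℕ) : ℤ[X] := X ^ k * (1 + X) ^ (n - k)

lemma booleanIntervalPoly_zero_right (n : ℕ) : booleanIntervalPoly n 0 = (1 + X) ^ n := by
  simp [booleanIntervalPoly]

lemma booleanIntervalPoly_self (n : ℕ) : booleanIntervalPoly n n = X ^ n := by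
  simp [booleanIntervalPoly]

lemma booleanIntervalPoly_eq_sub {n k : ℕ} (hk : k ≤ n) :
    booleanIntervalPoly n k =
      booleanIntervalPoly (n + 1) k - booleanIntervalPoly (n + 1) (k + 1) := by
  simp only [booleanIntervalPoly, Nat.add_sub_add_right, Nat.succ_sub hk, Nat.succ_eq_add_one]
  ring

lemma sum_Ico_booleanIntervalPoly {n k l : ℕ} (hkl : k ≤ l) (hl : l ≤ n + 1) :
    ∑ j ∈ Finset.Ico k l, booleanIntervalPoly n j =
      booleanIntervalPoly (n + 1) k - booleanIntervalPoly (n + 1) l := by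
  induction l, hkl using Nat.le_induction with
  | base => simp
  | succ l hkl ih =>
    rw [Finset.sum_Ico_succ_top hkl, ih (by lia), booleanIntervalPoly_eq_sub (Nat.lt_succ_iff.1 hl)]
    ring

lemma coeff_booleanIntervalPoly_self {n k : ℕ} (hk : k ≤ n) :
    (booleanIntervalPoly n k).coeff n = 1 := by
  rw [booleanIntervalPoly, coeff_X_pow_mul', if_pos hk, add_comm, coeff_X_add_one_pow,
    Nat.choose_self, Nat.cast_one]

lemma sum_coeff_smul_booleanIntervalPoly (p : ℤ[X]) (n : ℕ) :
    ∑ k ∈ Finset.range (n + 1), p.coeff k • booleanIntervalPoly n k =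
      MvPolynomial.aeval ![X, 1 + X] (p.homogenize n) := by
  rw [homogenize, Finset.Nat.sum_antidiagonal_eq_sum_range_succ_mk, map_sum]
  refine Finset.sum_congr rfl fun k _ => ?_
  rw [MvPolynomial.aeval_monomial]
  simp [booleanIntervalPoly, Finsupp.prod_fintype, Algebra.smul_def]

lemma homogenize_X_pow_mul_one_sub_X_pow {n i : ℕ} (hi : i ≤ n) :
    (X ^ i * (1 - X) ^ (n - i) : ℤ[X]).homogenize n =
      .X 0 ^ i * (.X 1 - .X 0) ^ (n - i) := by
  refine homogenize_eq_of_isHomogeneous ?_ (by simp)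
  have h := ((MvPolynomial.isHomogeneous_X ℤ (0 : Fin 2)).pow i).mul
    (((MvPolynomial.isHomogeneous_X ℤ (1 : Fin 2)).sub
      (MvPolynomial.isHomogeneous_X ℤ 0)).pow (n - i))
  rwa [one_mul, one_mul, Nat.add_sub_cancel' hi] at h

lemma sum_coeff_smul_booleanIntervalPoly_eq_sum_X_pow (f : ℕ → ℤ) (n : ℕ) :
    ∑ k ∈ Finset.range (n + 1), (∑ i ∈ Finset.range (n + 1),
        C (f i) * X ^ i * (1 - X) ^ (n - i)).coeff k • booleanIntervalPoly n k =
      ∑ i ∈ Finset.range (n + 1), C (f i) * X ^ i := by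
  rw [sum_coeff_smul_booleanIntervalPoly, homogenize_finsetSum, map_sum]
  refine Finset.sum_congr rfl fun i hi => ?_
  rw [mul_assoc, homogenize_C_mul,
    homogenize_X_pow_mul_one_sub_X_pow (Nat.lt_succ_iff.1 (Finset.mem_range.1 hi))]
  simp

/-! ### Simplicial posets -/

namespace IsRankFunction

variable {P Q : Type*} [PartialOrder P] [OrderBot P] [PartialOrder Q] [OrderBot Q] {rk : P → ℕ}

lemma strictMono [Finite P] (hrk : IsRankFunction rk) : StrictMono rk := by
  classical
  have := Fintype.ofFinite P
  let := Fintype.toLocallyFiniteOrder (α := P)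
  refine (strictMono_iff_forall_covBy rk).2 fun a b hab => ?_
  rw [hrk.2 a b hab]
  exact Nat.lt_succ_self _

lemma eq_zero_iff [Finite P] (hrk : IsRankFunction rk) {x : P} : rk x = 0 ↔ x = ⊥ := by
  refine ⟨fun hx => ?_, fun hx => hx ▸ hrk.1⟩
  by_contra hne
  exact (hrk.strictMono (bot_lt_iff_ne_bot.2 hne)).ne (by rw [hrk.1, hx])

lemma unique [Finite P] {rk' : P → ℕ} (hrk : IsRankFunction rk) (hrk' : IsRankFunction rk') :
    rk = rk' := by
  funext x
  induction x using WellFoundedLT.induction with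
  | ind x ih =>
    obtain rfl | hx := eq_or_ne x ⊥
    · rw [hrk.1, hrk'.1]
    · obtain ⟨y, -, hy⟩ := exists_le_covBy_of_lt (bot_lt_iff_ne_bot.2 hx)
      rw [hrk.2 y x hy, hrk'.2 y x hy, ih y hy.lt]

lemma comp_orderEmbedding (hrk : IsRankFunction rk) (g : Q ↪o P)
    (hg : IsLowerSet (Set.range g)) : IsRankFunction (rk ∘ g) := by
  refine ⟨?_, fun a b hab => hrk.2 _ _ (hab.image g hg.ordConnected)⟩
  obtain ⟨x, hx⟩ := hg bot_le ⟨⊥, rfl⟩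
  have h_bot : g ⊥ = ⊥ := le_bot_iff.1 (hx ▸ g.monotone bot_le)
  rw [Function.comp_apply, h_bot, hrk.1]

lemma fvec_zero [Fintype P] (hrk : IsRankFunction rk) : fvec rk 0 = 1 :=
  Finset.card_eq_one.2 ⟨⊥, by ext x; simp [hrk.eq_zero_iff]⟩

lemma hvec_zero [Fintype P] (hrk : IsRankFunction rk) (n : ℕ) : hvec rk n 0 = 1 := by
  rw [hvec, hPoly, coeff_zero_eq_eval_zero, eval_finsetSum, Finset.sum_eq_single 0]
  · simp [hrk.fvec_zero]
  · simp +contextual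
  · simp

end IsRankFunction

lemma isRankFunction_finset_card (α : Type*) :
    IsRankFunction (Finset.card : Finset α → ℕ) :=
  ⟨Finset.card_empty, fun _ _ hst => (Order.covBy_iff_add_one_eq.1 hst.card_finset).symm⟩

/-- Simplicial posets, not necessarily pure: every lower interval is isomorphic to a finite Boolean
lattice. -/
def IsSimplicialPoset (P : Type*) [PartialOrder P] : Prop :=
  ∀ m : P, ∃ d, Nonempty (Set.Iic m ≃o Finset (Fin d))

lemma nonempty_Iic_orderIso_finset {P : Type*} [PartialOrder P] {n : ℕ}
    (g : Finset (Fin n) ↪o P) (hg : IsLowerSet (Set.range g)) (T : Finset (Fin n)) :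
    Nonempty (Set.Iic (g T) ≃o Finset (Fin T.card)) := by
  let e := Finset.mapEmbedding (T.orderEmbOfFin rfl).toEmbedding
  have hT : Finset.univ.map (T.orderEmbOfFin rfl).toEmbedding = T := by simp
  have he (S : Finset (Fin T.card)) : e S ≤ T :=
    (Finset.map_subset_map.2 (Finset.subset_univ S)).trans hT.subset
  have h_range : Set.range (e.trans g) = Set.Iic (g T) := by
    ext x
    simp only [RelEmbedding.coe_trans, Set.mem_range, Function.comp_apply, Set.mem_Iic]
    constructor
    · rintro ⟨S, rfl⟩
      exact g.monotone (he S)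
    · intro hx
      obtain ⟨S, rfl⟩ := hg hx ⟨T, rfl⟩
      have hST : S ⊆ T := g.le_iff_le.1 hx
      obtain ⟨U, -, rfl⟩ := Finset.subset_map_iff.1 (hST.trans hT.symm.subset)
      exact ⟨U, rfl⟩
  exact ⟨(OrderIso.setCongr _ _ h_range.symm).trans (OrderEmbedding.orderIso (f := e.trans g)).symm⟩

lemma isSimplicialPoset_finset (n : ℕ) : IsSimplicialPoset (Finset (Fin n)) := fun T =>
  ⟨_, nonempty_Iic_orderIso_finset (RelEmbedding.refl _) (by simp [isLowerSet_univ]) T⟩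

lemma SimplicialOfRank.isSimplicialPoset {P : Type*} [Finite P] [PartialOrder P] [OrderBot P]
    {n : ℕ} (h : SimplicialOfRank P n) : IsSimplicialPoset P := by
  intro m
  obtain ⟨M, hmM, hM⟩ := Finite.exists_le_maximal (p := fun _ : P => True) (a := m) trivial
  obtain ⟨e⟩ := h M (maximal_true.1 hM)
  let g : Finset (Fin n) ↪o P := e.symm.toOrderEmbedding.trans (OrderEmbedding.subtype _)
  have hg : IsLowerSet (Set.range g) := by
    rintro _ x hx ⟨S, rfl⟩
    exact ⟨e ⟨x, bot_le, hx.trans (e.symm S).2.2⟩, by simp [g]⟩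
  have hm : g (e ⟨m, bot_le, hmM⟩) = m := by simp [g]
  exact ⟨_, hm ▸ nonempty_Iic_orderIso_finset g hg (e ⟨m, bot_le, hmM⟩)⟩

/-! ### Flags -/

section Flags

variable {P Q : Type*} [PartialOrder P] [OrderBot P] [PartialOrder Q] [OrderBot Q]

/-- The flags (chains avoiding the bottom) with rank set `T`, which `flagF` counts. -/
def IsFlag (rk : P → ℕ) (T : Finset ℕ) (c : Finset P) : Prop :=
  IsChain (· ≤ ·) (c : Set P) ∧ ⊥ ∉ c ∧ c.image rk = T

namespace IsFlag

variable {rk : P → ℕ} {T : Finset ℕ} {c : Finset P} {m : P}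

lemma empty_iff : IsFlag rk ∅ c ↔ c = ∅ :=
  ⟨fun h => Finset.image_eq_empty.1 h.2.2, by rintro rfl; simp [IsFlag]⟩

lemma map_iff {c : Finset Q} {g : Q ↪o P} (hg : g ⊥ = ⊥) :
    IsFlag rk T (c.map g.toEmbedding) ↔ IsFlag (rk ∘ g) T c := by
  classical
  have h_bot : ⊥ ∈ c.map g.toEmbedding ↔ ⊥ ∈ c := by
    rw [← hg]
    exact Finset.mem_map' g.toEmbedding
  rw [IsFlag, IsFlag, h_bot, Finset.coe_map, Finset.map_eq_image, Finset.image_image]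
  exact and_congr_left' IsChain.image_embedding_iff

lemma rk_mem (h : IsFlag rk T c) {x : P} (hx : x ∈ c) : rk x ∈ T :=
  h.2.2 ▸ Finset.mem_image_of_mem rk hx

lemma le_of_rk_le (h : IsFlag rk T c) (hrk : StrictMono rk) {x y : P} (hx : x ∈ c) (hy : y ∈ c)
    (hxy : rk x ≤ rk y) : x ≤ y := by
  by_contra hle
  exact (hrk (lt_of_le_not_ge ((h.1.total hx hy).resolve_left hle) hle)).not_ge hxy

lemma injOn (h : IsFlag rk T c) (hrk : StrictMono rk) : Set.InjOn rk c := fun _ hx _ hy hxy =>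
  (h.le_of_rk_le hrk hx hy hxy.le).antisymm (h.le_of_rk_le hrk hy hx hxy.ge)

variable [DecidableEq P]

lemma insert (h : IsFlag rk T c) (hm : m ≠ ⊥) (hc : ∀ x ∈ c, x ≤ m) :
    IsFlag rk (insert (rk m) T) (insert m c) := by
  refine ⟨?_, by simp [hm.symm, h.2.1], by rw [Finset.image_insert, h.2.2]⟩
  rw [Finset.coe_insert]
  exact h.1.insert fun x hx _ => .inr (hc x hx)

lemma erase (h : IsFlag rk T c) (hrk : StrictMono rk) (hm : m ∈ c) :
    IsFlag rk (T.erase (rk m)) (c.erase m) := by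
  refine ⟨h.1.mono (by simp), fun h_bot => h.2.1 (Finset.mem_of_mem_erase h_bot), ?_⟩
  rw [← h.2.2, Finset.erase_eq, Finset.erase_eq,
    Finset.image_sdiff_of_injOn (h.injOn hrk) (by simpa using hm), Finset.image_singleton]

lemma exists_eq_insert {t : ℕ} (h : IsFlag rk (Insert.insert t T) c) (hrk : StrictMono rk)
    (hT : ∀ i ∈ T, i < t) :
    ∃ m c', rk m = t ∧ IsFlag rk T c' ∧ (∀ x ∈ c', x ≤ m) ∧ c = Insert.insert m c' := by
  obtain ⟨m, hmc, rfl⟩ := Finset.mem_image.1 (h.2.2 ▸ Finset.mem_insert_self t T)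
  have h_erase := h.erase hrk hmc
  rw [Finset.erase_insert fun hm => (hT _ hm).false] at h_erase
  exact ⟨m, c.erase m, rfl, h_erase, fun x hx =>
    h.le_of_rk_le hrk (Finset.mem_of_mem_erase hx) hmc (hT _ (h_erase.rk_mem hx)).le,
    (Finset.insert_erase hmc).symm⟩

end IsFlag

lemma flagF_empty (rk : P → ℕ) : flagF rk ∅ = 1 := by
  refine (Nat.card_congr (Equiv.subtypeEquivRight fun c => IsFlag.empty_iff)).trans ?_
  simp

lemma flagF_comp_orderIso (rk : Q → ℕ) (φ : P ≃o Q) (T : Finset ℕ) :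
    flagF (rk ∘ φ) T = flagF rk T :=
  Nat.card_congr (Equiv.subtypeEquiv φ.toEquiv.finsetCongr fun _ =>
    (IsFlag.map_iff (g := φ.toOrderEmbedding) φ.map_bot).symm)

/-- A flag is determined by its largest element `m` and the rest, a flag of `Set.Iic m`. -/
lemma flagF_insert [Fintype P] {rk : P → ℕ} (hrk : StrictMono rk) {t : ℕ} {T : Finset ℕ}
    (hT : ∀ i ∈ T, i < t) (ht : rk ⊥ ≠ t) :
    flagF rk (insert t T) = ∑ m : {m // rk m = t}, flagF (fun x : Set.Iic m.1 => rk x) T := by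
  classical
  let ι (m : P) : Set.Iic m ↪o P := OrderEmbedding.subtype _
  have hι {m : P} {c : Finset (Set.Iic m)} :
      IsFlag (fun x : Set.Iic m => rk x) T c ↔ IsFlag rk T (c.map (ι m).toEmbedding) :=
    (IsFlag.map_iff (g := ι m) rfl).symm
  have notMem {c : Finset P} (hc : IsFlag rk T c) {m : P} (hm : rk m = t) : m ∉ c :=
    fun hmc => (hT _ (hc.rk_mem hmc)).ne hm
  let extend (q : Σ m : {m // rk m = t},
      {c : Finset (Set.Iic m.1) // IsFlag (fun x : Set.Iic m.1 => rk x) T c}) :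
      {c // IsFlag rk (insert t T) c} :=
    ⟨insert q.1.1 (q.2.1.map (ι q.1).toEmbedding), by
      obtain ⟨⟨m, rfl⟩, c, hc⟩ := q
      exact (hι.1 hc).insert (ne_of_apply_ne rk ht.symm) (by simp +contextual [ι])⟩
  suffices Function.Bijective extend from
    (Nat.card_eq_of_bijective extend this).symm.trans Nat.card_sigma
  constructor
  · rintro ⟨⟨m, hm⟩, c, hc⟩ ⟨⟨m', hm'⟩, c', hc'⟩ h
    replace h : insert m (c.map (ι m).toEmbedding) = insert m' (c'.map (ι m').toEmbedding) :=
      congrArg Subtype.val h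
    obtain rfl : m = m' := by
      have hmem := h ▸ Finset.mem_insert_self m _
      exact (Finset.mem_insert.1 hmem).resolve_right (notMem (hι.1 hc') hm)
    obtain rfl : c = c' := by
      refine Finset.map_injective (ι m).toEmbedding ?_
      rw [← Finset.erase_insert (notMem (hι.1 hc) hm), h,
        Finset.erase_insert (notMem (hι.1 hc') hm)]
    rfl
  · rintro ⟨c, hc⟩
    obtain ⟨m, c, rfl, hc', hle, rfl⟩ := hc.exists_eq_insert hrk hT
    have h_map : (c.subtype (· ∈ Set.Iic m)).map (ι m).toEmbedding = c :=
      Finset.subtype_map_of_mem hle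
    exact ⟨⟨⟨m, rfl⟩, _, hι.2 (h_map.symm ▸ hc')⟩, Subtype.ext (by simp only [extend, h_map])⟩

end Flags

lemma flagF_insert_eq_fvec_mul {P : Type*} [Fintype P] [PartialOrder P] [OrderBot P] {rk : P → ℕ}
    (hP : IsSimplicialPoset P) (hrk : IsRankFunction rk) {t : ℕ} (ht : 0 < t) {T : Finset ℕ}
    (hT : ∀ i ∈ T, i < t) :
    flagF rk (insert t T) = fvec rk t * flagF (Finset.card : Finset (Fin t) → ℕ) T := by
  rw [flagF_insert hrk.strictMono hT (hrk.1 ▸ ht.ne)]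
  have h_interval (m : {m // rk m = t}) : flagF (fun x : Set.Iic m.1 => rk x) T =
      flagF (Finset.card : Finset (Fin t) → ℕ) T := by
    obtain ⟨m, rfl⟩ := m
    obtain ⟨d, ⟨φ⟩⟩ := hP m
    let g : Finset (Fin d) ↪o P := φ.symm.toOrderEmbedding.trans (OrderEmbedding.subtype _)
    have hg : IsLowerSet (Set.range g) := by
      rintro _ x hx ⟨S, rfl⟩
      exact ⟨φ ⟨x, hx.trans (φ.symm S).2⟩, by simp [g]⟩
    have h_rk : (fun x : Set.Iic m => rk x) = Finset.card ∘ φ := by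
      rw [← (hrk.comp_orderEmbedding g hg).unique (isRankFunction_finset_card _)]
      funext x
      simp [g]
    obtain rfl : rk m = d := by
      simpa [φ.map_top] using congrFun h_rk ⊤
    rw [h_rk, flagF_comp_orderIso]
  rw [Finset.sum_congr rfl fun m _ => h_interval m, Finset.sum_const, smul_eq_mul,
    Finset.card_univ, Fintype.card_subtype]
  rfl

/-! ### Flag numbers as functionals of the f-polynomial -/

/-- The linear functional which sends the f-polynomial of every simplicial poset to its flag number
at `T`: a flag consists of its top element and of a flag of the Boolean lattice below. -/
noncomputable def flagFMap (T : Finset ℕ) : ℤ[X] →ₗ[ℤ] ℤ :=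
  (flagF (Finset.card : Finset (Fin (T.sup id)) → ℕ) (T.erase (T.sup id)) : ℤ) •
    lcoeff ℤ (T.sup id)

lemma flagFMap_empty : flagFMap ∅ = lcoeff ℤ 0 := by
  simp [flagFMap, flagF_empty]

lemma flagFMap_insert {t : ℕ} {T : Finset ℕ} (hT : ∀ i ∈ T, i < t) (f : ℤ[X]) :
    flagFMap (insert t T) f = f.coeff t * flagF (Finset.card : Finset (Fin t) → ℕ) T := by
  have h_sup : (insert t T).sup id = t := by
    simpa [Finset.sup_insert] using fun i hi => (hT i hi).le
  rw [flagFMap, h_sup, Finset.erase_insert fun ht => (hT t ht).false]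
  exact mul_comm _ _

section SimplicialPoset

variable {P : Type*} [Fintype P] [PartialOrder P] [OrderBot P] {rk : P → ℕ}

lemma flagFMap_eq_flagF (hP : IsSimplicialPoset P) (hrk : IsRankFunction rk) {T : Finset ℕ}
    (h0 : 0 ∉ T) {f : ℤ[X]} (hf : ∀ i ∈ insert 0 T, f.coeff i = fvec rk i) :
    flagFMap T f = flagF rk T := by
  induction T using Finset.induction_on_max with
  | empty => simp [flagFMap_empty, flagF_empty, hf, hrk.fvec_zero]
  | insert t T hT =>
    have ht : 0 < t := Nat.pos_of_ne_zero fun h => h0 (by simp [h])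
    rw [flagFMap_insert hT, flagF_insert_eq_fvec_mul hP hrk ht hT, hf t (by simp), Nat.cast_mul]

lemma flagFMap_one_add_X_pow (n : ℕ) {T : Finset ℕ} (h0 : 0 ∉ T) :
    flagFMap T ((1 + X) ^ n) = flagF (Finset.card : Finset (Fin n) → ℕ) T := by
  refine flagFMap_eq_flagF (isSimplicialPoset_finset n) (isRankFunction_finset_card _) h0
    fun i _ => ?_
  have h_fvec : fvec (Finset.card : Finset (Fin n) → ℕ) i = n.choose i := by
    simp [fvec, Finset.univ_filter_card_eq]
  rw [coeff_one_add_X_pow, h_fvec]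

/-- The linear functional which sends the f-polynomial of every simplicial poset to its entry of the
flag h-vector at `S`. -/
noncomputable def flagHMap (S : Finset ℕ) : ℤ[X] →ₗ[ℤ] ℤ :=
  ∑ T ∈ S.powerset, (-1 : ℤ) ^ (S \ T).card • flagFMap T

lemma flagHMap_apply (S : Finset ℕ) (f : ℤ[X]) :
    flagHMap S f = ∑ T ∈ S.powerset, (-1 : ℤ) ^ (S \ T).card * flagFMap T f := by
  simp [flagHMap, LinearMap.sum_apply]

lemma flagHMap_eq_flagH (hP : IsSimplicialPoset P) (hrk : IsRankFunction rk) {S : Finset ℕ}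
    (h0 : 0 ∉ S) {f : ℤ[X]} (hf : ∀ i ∈ insert 0 S, f.coeff i = fvec rk i) :
    flagHMap S f = flagH rk S := by
  rw [flagHMap_apply, flagH]
  refine Finset.sum_congr rfl fun T hT => ?_
  rw [Finset.mem_powerset] at hT
  rw [flagFMap_eq_flagF hP hrk (fun h => h0 (hT h))
    fun i hi => hf i (Finset.insert_subset_insert 0 hT hi)]

end SimplicialPoset

lemma flagHMap_insert {t : ℕ} {S : Finset ℕ} (h0 : 0 ∉ S) (hS : ∀ i ∈ S, i < t) (f : ℤ[X]) :
    flagHMap (insert t S) f = flagHMap S (f.coeff t • (1 + X) ^ t - f) := by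
  have ht : t ∉ S := fun h => (hS t h).false
  rw [flagHMap_apply, flagHMap_apply, Finset.sum_powerset_insert ht, ← Finset.sum_add_distrib]
  refine Finset.sum_congr rfl fun T hT => ?_
  rw [Finset.mem_powerset] at hT
  have htT : t ∉ T := fun h => ht (hT h)
  rw [Finset.insert_sdiff_of_notMem _ htT, Finset.card_insert_of_notMem (by simp [ht]),
    Finset.insert_sdiff_insert, Finset.sdiff_insert_of_notMem ht,
    flagFMap_insert fun i hi => hS i (hT hi), map_sub, map_smul,
    flagFMap_one_add_X_pow t fun h => h0 (hT h), smul_eq_mul]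
  ring

/-! ### Isolated sets and the augmented Chow polynomial -/

lemma IsolatedSet.two_mul_card_le {n : ℕ} {S : Finset ℕ} (hS : IsolatedSet S)
    (hSn : S ⊆ Finset.Icc 1 n) : 2 * S.card ≤ n + 1 := by
  have h_disj : Disjoint S (S.map (addRightEmbedding 1)) := by
    rw [Finset.disjoint_right, Finset.forall_mem_map]
    exact hS
  have h_sub : S ∪ S.map (addRightEmbedding 1) ⊆ Finset.Icc 1 (n + 1) := by
    refine Finset.union_subset (hSn.trans (Finset.Icc_subset_Icc_right n.le_succ)) ?_
    refine (Finset.map_subset_map.2 hSn).trans ?_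
    rw [Finset.map_add_right_Icc]
    exact Finset.Icc_subset_Icc_left (by lia)
  have h_card := Finset.card_le_card h_sub
  rw [Finset.card_union_of_disjoint h_disj, Finset.card_map, Nat.card_Icc] at h_card
  lia

lemma isolatedSet_insert_succ_iff {n : ℕ} {S : Finset ℕ} (hS : S ⊆ Finset.Icc 1 n) :
    IsolatedSet (insert (n + 1) S) ↔ IsolatedSet S ∧ S ⊆ Finset.Icc 1 (n - 1) := by
  rw [IsolatedSet, Finset.forall_mem_insert]
  simp only [Finset.mem_insert, not_or]
  constructor
  · rintro ⟨-, h⟩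
    refine ⟨fun i hi => (h i hi).2, fun i hi => ?_⟩
    have := Finset.mem_Icc.1 (hS hi)
    have := (h i hi).1
    exact Finset.mem_Icc.2 (by lia)
  · rintro ⟨h, hS'⟩
    refine ⟨⟨by lia, fun hn => ?_⟩, fun i hi => ⟨?_, h i hi⟩⟩
    · have := Finset.mem_Icc.1 (hS hn)
      lia
    · have := Finset.mem_Icc.1 (hS hi)
      have := Finset.mem_Icc.1 (hS' hi)
      lia

lemma sum_isolatedSet_succ {M : Type*} [AddCommMonoid M] (n : ℕ) (F : Finset ℕ → M) :
    ∑ S ∈ (Finset.Icc 1 (n + 1)).powerset with IsolatedSet S, F S =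
      ∑ S ∈ (Finset.Icc 1 n).powerset with IsolatedSet S, F S +
        ∑ S ∈ (Finset.Icc 1 (n - 1)).powerset with IsolatedSet S, F (insert (n + 1) S) := by
  have h_mem : n + 1 ∉ Finset.Icc 1 n := by simp
  rw [← Finset.insert_Icc_right_eq_Icc_add_one (by lia), Finset.sum_filter,
    Finset.sum_powerset_insert h_mem, ← Finset.sum_filter, ← Finset.sum_filter]
  congr 2
  ext S
  simp only [Finset.mem_filter, Finset.mem_powerset]
  constructor
  · rintro ⟨hS, h⟩
    exact ((isolatedSet_insert_succ_iff hS).1 h).symm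
  · rintro ⟨hS, h⟩
    have hSn := hS.trans (Finset.Icc_subset_Icc_right n.pred_le)
    exact ⟨hSn, (isolatedSet_insert_succ_iff hSn).2 ⟨h, hS⟩⟩

/-- The linear map which sends the f-polynomial of every simplicial poset of rank `n` to the
γ-polynomial of its augmented Chow polynomial. -/
noncomputable def gammaMap (n : ℕ) : ℤ[X] →ₗ[ℤ] ℝ[X] :=
  ∑ S ∈ (Finset.Icc 1 n).powerset with IsolatedSet S, (flagHMap S).smulRight (X ^ S.card)

lemma gammaMap_apply (n : ℕ) (f : ℤ[X]) :
    gammaMap n f = ∑ S ∈ (Finset.Icc 1 n).powerset with IsolatedSet S,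
      flagHMap S f • (X ^ S.card : ℝ[X]) := by
  simp [gammaMap, LinearMap.sum_apply]

lemma gammaMap_zero : gammaMap 0 f = C (f.coeff 0 : ℝ) := by
  have h_sets : {S ∈ (Finset.Icc 1 0).powerset | IsolatedSet S} = {∅} := by decide
  rw [gammaMap_apply, h_sets]
  simp [flagHMap_apply, flagFMap_empty]

lemma gammaMap_succ (n : ℕ) (f : ℤ[X]) :
    gammaMap (n + 1) f =
      gammaMap n f + X * gammaMap (n - 1) (f.coeff (n + 1) • (1 + X) ^ (n + 1) - f) := by
  simp only [gammaMap_apply]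
  rw [sum_isolatedSet_succ, Finset.mul_sum]
  congr 1
  refine Finset.sum_congr rfl fun S hS => ?_
  have hS_Icc := Finset.mem_powerset.1 (Finset.mem_filter.1 hS).1
  have h_lt : ∀ i ∈ S, i < n + 1 := fun i hi => by
    have := Finset.mem_Icc.1 (hS_Icc hi)
    lia
  rw [flagHMap_insert (fun h => by simpa using hS_Icc h) h_lt,
    Finset.card_insert_of_notMem fun h => (h_lt _ h).false, pow_succ' X, mul_smul_comm]

lemma gammaMap_X_pow {n m : ℕ} (h : n < m) : gammaMap n (X ^ m) = 0 := by
  rw [gammaMap_apply]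
  refine Finset.sum_eq_zero fun S hS => ?_
  rw [Finset.mem_filter, Finset.mem_powerset] at hS
  have h_flag : flagHMap S (X ^ m) = 0 := by
    rw [flagHMap_apply]
    refine Finset.sum_eq_zero fun T hT => ?_
    have h_sup : T.sup id < m := (Finset.sup_lt_iff (Nat.zero_lt_of_lt h)).2 fun i hi =>
      (Finset.mem_Icc.1 (hS.1 (Finset.mem_powerset.1 hT hi))).2.trans_lt h
    simp [flagFMap, coeff_X_pow, h_sup.ne]
  rw [h_flag, zero_smul]

lemma gammaMap_booleanIntervalPoly (n : ℕ) : ∀ k ≤ n,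
    gammaMap (n - 1) (booleanIntervalPoly n k) = ascentPoly n k ∧
      gammaMap n (booleanIntervalPoly n k) = isolatedDescentPoly n k := by
  induction n with
  | zero => simp [booleanIntervalPoly, gammaMap_zero]
  | succ n ih =>
    intro k hk
    have h_ascent : gammaMap n (booleanIntervalPoly (n + 1) k) = ascentPoly (n + 1) k := by
      rw [← sub_add_cancel (booleanIntervalPoly (n + 1) k) (booleanIntervalPoly (n + 1) (n + 1)),
        ← sum_Ico_booleanIntervalPoly hk le_rfl, map_add, map_sum, booleanIntervalPoly_self,
        gammaMap_X_pow n.lt_succ_self, add_zero, ascentPoly_succ]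
      exact Finset.sum_congr rfl fun j hj => (ih j (Nat.lt_succ_iff.1 (Finset.mem_Ico.1 hj).2)).2
    have h_descent : gammaMap (n - 1) ((1 + X) ^ (n + 1) - booleanIntervalPoly (n + 1) k) =
        descentPoly (n + 1) k := by
      rw [← booleanIntervalPoly_zero_right, ← sum_Ico_booleanIntervalPoly k.zero_le hk,
        map_sum, descentPoly_succ]
      exact Finset.sum_congr rfl fun j hj =>
        (ih j (Nat.lt_succ_iff.1 ((Finset.mem_Ico.1 hj).2.trans_le hk))).1
    refine ⟨h_ascent, ?_⟩
    rw [gammaMap_succ, coeff_booleanIntervalPoly_self hk, one_smul, h_ascent, h_descent,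
      isolatedDescentPoly]

theorem sum_flagH_smul_X_pow_eq_sum_hvec_smul {P : Type*} [Fintype P] [PartialOrder P] [OrderBot P]
    {rk : P → ℕ} (hP : IsSimplicialPoset P) (hrk : IsRankFunction rk) (n : ℕ) :
    ∑ S ∈ (Finset.Icc 1 n).powerset with IsolatedSet S, (flagH rk S : ℝ) • (X ^ S.card : ℝ[X]) =
      ∑ k ∈ Finset.range (n + 1), (hvec rk n k : ℝ) • isolatedDescentPoly n k := by
  let f : ℤ[X] := ∑ i ∈ Finset.range (n + 1), C (fvec rk i : ℤ) * X ^ i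
  have hf (i : ℕ) (hi : i ≤ n) : f.coeff i = fvec rk i := by
    simp [f, finsetSum_coeff, coeff_X_pow, hi]
  trans gammaMap n f
  · rw [gammaMap_apply]
    refine Finset.sum_congr rfl fun S hS => ?_
    have hS_Icc := Finset.mem_powerset.1 (Finset.mem_filter.1 hS).1
    rw [flagHMap_eq_flagH hP hrk (fun h => by simpa using hS_Icc h), Int.cast_smul_eq_zsmul]
    refine Finset.forall_mem_insert _ _ _ |>.2 ⟨hf 0 n.zero_le, fun i hi => hf i ?_⟩
    exact (Finset.mem_Icc.1 (hS_Icc hi)).2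
  · simp only [f]
    rw [← sum_coeff_smul_booleanIntervalPoly_eq_sum_X_pow, map_sum]
    refine Finset.sum_congr rfl fun k hk => ?_
    rw [map_smul, (gammaMap_booleanIntervalPoly n k (Finset.mem_range_succ_iff.1 hk)).2,
      Int.cast_smul_eq_zsmul]
    rfl

theorem statement1_general {P : Type*} [Fintype P] [PartialOrder P] [OrderBot P] {n : ℕ}
    {rk : P → ℕ} (hrk : IsRankFunction rk) (hP : IsSimplicialPoset P)
    (hpos : ∀ k, 0 ≤ hvec rk n k) : RealRooted (chowAugPoly rk n) := by
  refine realRooted_sum_gammaExpansion (fun S hS => ?_) fun z hz => ?_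
  · rw [Finset.mem_filter, Finset.mem_powerset] at hS
    exact hS.2.two_mul_card_le hS.1
  · rw [sum_flagH_smul_X_pow_eq_sum_hvec_smul hP hrk] at hz
    refine nonpos_of_aeval_sum_smul_isolatedDescentPoly_eq_zero ?_ (fun k => ?_) hz
    · simp [hrk.hvec_zero]
    · exact_mod_cast hpos k

theorem statement1 {P : Type*} [Fintype P] [PartialOrder P] [OrderBot P]
    (n : ℕ) (rk : P → ℕ)
    (hrk : IsRankFunction rk)
    (hsimp : SimplicialOfRank P n)
    (hpos : ∀ k, 0 ≤ hvec rk n k) :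
    RealRooted (chowAugPoly rk n) :=
  statement1_general hrk hsimp.isSimplicialPoset hpos
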